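/- arXiv:1012.4145 — 3 statements merged into one kernel-verified Lean document; each statement's English description precedes it below -/
import Mathlib

section
/- Let x ∈ ℂ with x ∉ {0, −1, −2, …}. Then lim_{r→0⁺} (2π b(r)) · G_{b(r)}(b(r)·x) / (2πr)^x = Γ(x), and the convergence is uniform on compact subsets of ℂ ∖ {0, −1, −2, …}. -/
open Complex Filter Topology

/-- ζ̄_b = exp(−πi/4 − (πi/12)(b² + b^{−2})). -/
noncomputable def zetaBar (b : ℂ) : ℂ :=
  Complex.exp (-(Real.pi * Complex.I) / 4 - (Real.pi * Complex.I) / 12 * (b ^ 2 + b⁻¹ ^ 2))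

/-- The quantum dilogarithm `G_b(x)`, defined for `Im(b²) > 0` by the infinite product
`ζ̄_b · ∏_{n=1}^∞ (1 − e^{2πi b⁻¹(x − n b⁻¹)}) / ∏_{n=0}^∞ (1 − e^{2πi b(x + n b)})`. -/
noncomputable def Gb (b x : ℂ) : ℂ :=
  zetaBar b *
      (∏' n : ℕ, (1 - Complex.exp (2 * Real.pi * Complex.I * b⁻¹ * (x - (n + 1) * b⁻¹)))) /
    (∏' n : ℕ, (1 - Complex.exp (2 * Real.pi * Complex.I * b * (x + n * b))))

/-- `b(r) = e^{iπ/4} √r`, so that `b(r)² = i r`. -/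
noncomputable def br (r : ℝ) : ℂ :=
  Complex.exp (Real.pi * Complex.I / 4) * (Real.sqrt r : ℂ)

/-!
Write `q = e^{-2πr}` and `q' = e^{-2π/r}`. The modular transformation of Dedekind's `η` turns the
prefactor `ζ̄_b` into `-i b (q; q)_∞ / (q'; q')_∞`, so that `2πb G_b(bx) / (2πr)^x` equals
`Γ_q(x) · ((1 - q) / (2πr))^{x-1} · (e^{2πix} q'; q')_∞ / (q'; q')_∞`. The last two factors tend to
`1` as `r → 0⁺`, so everything rests on `Γ_q(x) → Γ(x)` as `q → 1⁻`, jointly in `x`, since a joint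
limit is automatically uniform on compact sets.

For this limit, `1 / Γ_q(x)` is compared with Euler's product for `1 / Γ(x)`. With `[x]_q` instead
of `x` as exponent of its convergence factor, each factor is `1 + O(1 / (n + 1)²)` uniformly in `q`,
so dominated convergence applies to the product; the power `(1 - q)^{x - [x]_q}` left over by this
change of exponent tends to `1` because `x - [x]_q = O(1 - q)`.
-/

/-! ### The `q`-Pochhammer symbol -/

/-- The infinite `q`-Pochhammer symbol `(a; q)_∞`. -/
noncomputable def qPochhammer (a q : ℂ) : ℂ := ∏' n : ℕ, (1 - a * q ^ n)

lemma qPochhammer_zero_left (q : ℂ) : qPochhammer 0 q = 1 := by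
  simp [qPochhammer]

lemma summable_norm_neg_mul_pow (a : ℂ) {q : ℂ} (hq : ‖q‖ < 1) :
    Summable fun n : ℕ => ‖-(a * q ^ n)‖ := by
  simpa using (summable_geometric_of_lt_one (norm_nonneg q) hq).mul_left ‖a‖

lemma multipliable_one_sub_mul_pow (a : ℂ) {q : ℂ} (hq : ‖q‖ < 1) :
    Multipliable fun n : ℕ => 1 - a * q ^ n := by
  simpa [sub_eq_add_neg] using multipliable_one_add_of_summable (summable_norm_neg_mul_pow a hq)

lemma qPochhammer_eq_one_sub_mul (a : ℂ) {q : ℂ} (hq : ‖q‖ < 1) :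
    qPochhammer a q = (1 - a) * qPochhammer (a * q) q := by
  have hshift (n : ℕ) : 1 - a * q ^ (n + 1) = 1 - a * q * q ^ n := by ring
  have hmul : Multipliable fun n : ℕ => 1 - a * q ^ (n + 1) := by
    simpa only [hshift] using multipliable_one_sub_mul_pow (a * q) hq
  rw [qPochhammer, tprod_eq_zero_mul' (f := fun n : ℕ => 1 - a * q ^ n) hmul, pow_zero, mul_one,
    qPochhammer, tprod_congr hshift]

lemma qPochhammer_self_ne_zero {q : ℂ} (hq : ‖q‖ < 1) : qPochhammer q q ≠ 0 := by
  have hfactor (n : ℕ) : 1 + -(q * q ^ n) ≠ 0 := by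
    rw [← pow_succ', ← sub_eq_add_neg, sub_ne_zero]
    intro h
    have hlt : ‖q ^ (n + 1)‖ < 1 := by
      simpa only [norm_pow] using pow_lt_one₀ (norm_nonneg q) hq n.succ_ne_zero
    simp [← h] at hlt
  simpa [qPochhammer, sub_eq_add_neg] using
    tprod_one_add_ne_zero_of_summable hfactor (summable_norm_neg_mul_pow q hq)

lemma continuousAt_qPochhammer (a : ℂ) {q : ℂ} (hq : ‖q‖ < 1) :
    ContinuousAt (fun p : ℂ × ℂ => qPochhammer p.1 p.2) (a, q) := by
  obtain ⟨ρ, hqρ, hρ⟩ := exists_between hq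
  have hρ₀ : 0 ≤ ρ := (norm_nonneg q).trans hqρ.le
  have hterm (n : ℕ) : Tendsto (fun p : ℂ × ℂ => -(p.1 * p.2 ^ n)) (𝓝 (a, q))
      (𝓝 (-(a * q ^ n))) :=
    Continuous.tendsto (by fun_prop) (a, q)
  have hfst : ∀ᶠ p : ℂ × ℂ in 𝓝 (a, q), ‖p.1‖ < ‖a‖ + 1 :=
    (continuous_fst.norm.tendsto (a, q)).eventually_lt_const (lt_add_one _)
  have hsnd : ∀ᶠ p : ℂ × ℂ in 𝓝 (a, q), ‖p.2‖ < ρ :=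
    (continuous_snd.norm.tendsto (a, q)).eventually_lt_const hqρ
  have hbound : ∀ᶠ p : ℂ × ℂ in 𝓝 (a, q), ∀ n : ℕ, ‖-(p.1 * p.2 ^ n)‖ ≤ (‖a‖ + 1) * ρ ^ n := by
    filter_upwards [hfst, hsnd] with p hp₁ hp₂ n
    rw [norm_neg, norm_mul, norm_pow]
    gcongr
  simpa [ContinuousAt, qPochhammer, sub_eq_add_neg] using
    tendsto_tprod_one_add_of_dominated_convergence
      ((summable_geometric_of_lt_one hρ₀ hρ).mul_left _) hterm hbound

lemma tendsto_qPochhammer_mul_div_self {α : Type*} {l : Filter α} {a q : α → ℂ} {a₀ : ℂ}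
    (ha : Tendsto a l (𝓝 a₀)) (hq : Tendsto q l (𝓝 0)) :
    Tendsto (fun i => qPochhammer (a i * q i) (q i) / qPochhammer (q i) (q i)) l (𝓝 1) := by
  have hcont : Tendsto (fun p : ℂ × ℂ => qPochhammer p.1 p.2) (𝓝 (0, 0)) (𝓝 1) := by
    simpa only [ContinuousAt, qPochhammer_zero_left] using
      continuousAt_qPochhammer 0 (q := 0) (by simp)
  have haq : Tendsto (fun i => a i * q i) l (𝓝 0) := by simpa using ha.mul hq
  have hnum : Tendsto (fun i => qPochhammer (a i * q i) (q i)) l (𝓝 1) := by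
    simpa only [Function.comp_def] using hcont.comp (haq.prodMk_nhds hq)
  have hden : Tendsto (fun i => qPochhammer (q i) (q i)) l (𝓝 1) := by
    simpa only [Function.comp_def] using hcont.comp (hq.prodMk_nhds hq)
  simpa only [Pi.div_def, div_one] using hnum.div hden one_ne_zero

/-! ### Euler's product for the Gamma function -/

/-- The `n`-th factor `(1 + x u) (1 + u)^{-x}`, at `u = 1 / (n + 1)`, of Euler's product for
`1 / (x Γ(x))`; keeping the weight `u` free covers the `q`-analogue of that product too. -/
noncomputable def eulerFactor (u : ℝ) (x : ℂ) : ℂ := (1 + u * x) * ((1 + u : ℝ) : ℂ) ^ (-x)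

lemma abs_log_one_add_sub_le {u : ℝ} (hu : 0 ≤ u) : |Real.log (1 + u) - u| ≤ u ^ 2 := by
  have hpos : 0 < 1 + u := by linarith
  have hlower : u - u ^ 2 ≤ 1 - (1 + u)⁻¹ := by
    rw [show 1 - (1 + u)⁻¹ = u / (1 + u) by field_simp; ring, le_div_iff₀ hpos]
    nlinarith [pow_nonneg hu 3]
  rw [abs_le]
  constructor <;> nlinarith [Real.one_sub_inv_le_log_of_pos hpos, Real.log_le_sub_one_of_pos hpos]

lemma norm_exp_sub_one_sub_le (z : ℂ) : ‖exp z - 1 - z‖ ≤ ‖z‖ ^ 2 * Real.exp ‖z‖ := by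
  simpa [Finset.sum_range_succ, sub_sub] using norm_exp_sub_sum_le_norm_mul_exp z 2

lemma norm_eulerFactor_sub_one_le {u : ℝ} (hu₀ : 0 ≤ u) (hu₁ : u ≤ 1) (x : ℂ) :
    ‖eulerFactor u x - 1‖ ≤ Real.exp ‖x‖ * (‖x‖ + ‖x‖ ^ 2 * Real.exp ‖x‖) * u ^ 2 := by
  have hpos : 0 < 1 + u := by linarith
  set l := Real.log (1 + u) with hl
  have hl₀ : 0 ≤ l := Real.log_nonneg (by linarith)
  have hlu : l ≤ u := by linarith [Real.log_le_sub_one_of_pos hpos]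
  have hnorm : ‖(l : ℂ) * x‖ = l * ‖x‖ := by
    rw [norm_mul, Complex.norm_real, Real.norm_of_nonneg hl₀]
  have hle : l * ‖x‖ ≤ ‖x‖ := mul_le_of_le_one_left (norm_nonneg x) (hlu.trans hu₁)
  have hexp : ‖exp (-(l * x))‖ ≤ Real.exp ‖x‖ := by
    refine (norm_exp_le_exp_norm _).trans (Real.exp_le_exp.mpr ?_)
    rwa [norm_neg, hnorm]
  have hlinear : ‖((u - l : ℝ) : ℂ) * x‖ ≤ u ^ 2 * ‖x‖ := by
    rw [norm_mul, Complex.norm_real, Real.norm_eq_abs, abs_sub_comm]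
    gcongr
    exact abs_log_one_add_sub_le hu₀
  have hquadratic : ‖exp (l * x) - 1 - l * x‖ ≤ (u * ‖x‖) ^ 2 * Real.exp ‖x‖ := by
    refine (norm_exp_sub_one_sub_le _).trans ?_
    rw [hnorm]
    gcongr
  have hfactor : eulerFactor u x - 1 =
      exp (-(l * x)) * (((u - l : ℝ) : ℂ) * x - (exp (l * x) - 1 - l * x)) := by
    have hcancel : exp (-(l * x)) * exp (l * x) = 1 := by
      rw [← Complex.exp_add, neg_add_cancel, Complex.exp_zero]
    rw [eulerFactor, cpow_def_of_ne_zero (by exact_mod_cast hpos.ne'), ← ofReal_log hpos.le, ← hl,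
      mul_neg]
    push_cast
    linear_combination hcancel
  calc ‖eulerFactor u x - 1‖
      ≤ Real.exp ‖x‖ * (u ^ 2 * ‖x‖ + (u * ‖x‖) ^ 2 * Real.exp ‖x‖) := by
        rw [hfactor, norm_mul]
        gcongr
        exact (norm_sub_le _ _).trans (add_le_add hlinear hquadratic)
    _ = Real.exp ‖x‖ * (‖x‖ + ‖x‖ ^ 2 * Real.exp ‖x‖) * u ^ 2 := by ring

lemma continuousAt_eulerFactor {u : ℝ} (hu : 0 ≤ u) (x : ℂ) :
    ContinuousAt (fun p : ℝ × ℂ => eulerFactor p.1 p.2) (u, x) := by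
  have hslit : ((1 + u : ℝ) : ℂ) ∈ slitPlane := ofReal_mem_slitPlane.mpr (by linarith)
  refine ContinuousAt.mul (by fun_prop) (ContinuousAt.cpow (by fun_prop) (by fun_prop) hslit)

lemma summable_const_mul_one_div_succ_sq (C : ℝ) :
    Summable fun n : ℕ => C * (1 / ((n : ℝ) + 1)) ^ 2 := by
  simp only [one_div, inv_pow]
  exact_mod_cast ((summable_nat_add_iff 1).mpr
    (Real.summable_nat_pow_inv.mpr one_lt_two)).mul_left C

lemma norm_eulerFactor_sub_one_le_of_le {u M : ℝ} {x : ℂ} {n : ℕ} (hu₀ : 0 ≤ u)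
    (hu : u ≤ 1 / ((n : ℝ) + 1)) (hx : ‖x‖ ≤ M) :
    ‖eulerFactor u x - 1‖ ≤
      Real.exp M * (M + M ^ 2 * Real.exp M) * (1 / ((n : ℝ) + 1)) ^ 2 := by
  have hn : 1 / ((n : ℝ) + 1) ≤ 1 := by
    rw [div_le_one (by positivity)]
    linarith [n.cast_nonneg (α := ℝ)]
  have hM : 0 ≤ M := (norm_nonneg x).trans hx
  refine (norm_eulerFactor_sub_one_le hu₀ (hu.trans hn) x).trans ?_
  gcongr

lemma multipliable_eulerFactor {u : ℕ → ℝ} (hu₀ : ∀ n, 0 ≤ u n)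
    (hu : ∀ n, u n ≤ 1 / ((n : ℝ) + 1)) (x : ℂ) : Multipliable fun n => eulerFactor (u n) x := by
  have hsum : Summable fun n => ‖eulerFactor (u n) x - 1‖ :=
    (summable_const_mul_one_div_succ_sq _).of_nonneg_of_le (fun _ => norm_nonneg _)
      fun n => norm_eulerFactor_sub_one_le_of_le (hu₀ n) (hu n) le_rfl
  simpa using multipliable_one_add_of_summable hsum

lemma tendsto_tprod_eulerFactor {α : Type*} {l : Filter α} {u : α → ℕ → ℝ} {v : ℕ → ℝ}
    {y : α → ℂ} {x : ℂ} (hu₀ : ∀ᶠ a in l, ∀ n, 0 ≤ u a n)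
    (hu : ∀ᶠ a in l, ∀ n, u a n ≤ 1 / ((n : ℝ) + 1)) (hv : ∀ n, 0 ≤ v n)
    (huv : ∀ n, Tendsto (u · n) l (𝓝 (v n))) (hy : Tendsto y l (𝓝 x)) :
    Tendsto (fun a => ∏' n, eulerFactor (u a n) (y a)) l (𝓝 (∏' n, eulerFactor (v n) x)) := by
  have hterm (n : ℕ) :
      Tendsto (fun a => eulerFactor (u a n) (y a) - 1) l (𝓝 (eulerFactor (v n) x - 1)) :=
    ((continuousAt_eulerFactor (hv n) x).tendsto.comp ((huv n).prodMk_nhds hy)).sub_const 1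
  have hbound : ∀ᶠ a in l, ∀ n, ‖eulerFactor (u a n) (y a) - 1‖ ≤ Real.exp (‖x‖ + 1) *
      ((‖x‖ + 1) + (‖x‖ + 1) ^ 2 * Real.exp (‖x‖ + 1)) * (1 / ((n : ℝ) + 1)) ^ 2 := by
    filter_upwards [hu₀, hu, hy.norm.eventually_le_const (lt_add_one _)] with a h₀ h₁ hya n
    exact norm_eulerFactor_sub_one_le_of_le (h₀ n) (h₁ n) hya
  simpa using tendsto_tprod_one_add_of_dominated_convergence
    (summable_const_mul_one_div_succ_sq _) hterm hbound

lemma prod_ofReal_cpow_of_nonneg {ι : Type*} {s : Finset ι} {f : ι → ℝ} (hf : ∀ i ∈ s, 0 ≤ f i)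
    (x : ℂ) : ∏ i ∈ s, (f i : ℂ) ^ x = ((∏ i ∈ s, f i : ℝ) : ℂ) ^ x := by
  classical
  induction s using Finset.induction_on with
  | empty => simp
  | insert i s hi ih =>
    obtain ⟨hfi, hfs⟩ := Finset.forall_mem_insert .. |>.mp hf
    rw [Finset.prod_insert hi, Finset.prod_insert hi, ih hfs, ofReal_mul,
      mul_cpow_ofReal_nonneg hfi (Finset.prod_nonneg hfs)]

lemma prod_eulerFactor {ι : Type*} {s : Finset ι} {u : ι → ℝ} (hu : ∀ i ∈ s, 0 ≤ u i) (x : ℂ) :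
    ∏ i ∈ s, eulerFactor (u i) x =
      (∏ i ∈ s, (1 + u i * x)) * ((∏ i ∈ s, (1 + u i) : ℝ) : ℂ) ^ (-x) := by
  simp only [eulerFactor, Finset.prod_mul_distrib]
  rw [prod_ofReal_cpow_of_nonneg fun i hi => add_nonneg zero_le_one (hu i hi)]

lemma prod_range_one_add_one_div_succ (N : ℕ) :
    ∏ n ∈ Finset.range N, (1 + 1 / ((n : ℝ) + 1)) = N + 1 := by
  induction N with
  | zero => simp
  | succ N ih =>
    rw [Finset.prod_range_succ, ih]
    push_cast
    field_simp

lemma prod_range_one_add_one_div_succ_mul (x : ℂ) (N : ℕ) :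
    ∏ n ∈ Finset.range N, (1 + 1 / ((n : ℂ) + 1) * x) =
      (∏ n ∈ Finset.range N, (x + (n + 1))) / N.factorial := by
  rw [← Finset.prod_range_add_one_eq_factorial, Nat.cast_prod, ← Finset.prod_div_distrib]
  refine Finset.prod_congr rfl fun n _ => ?_
  have hn : (n : ℂ) + 1 ≠ 0 := n.cast_add_one_ne_zero
  push_cast
  field_simp
  ring

lemma mul_prod_eulerFactor_mul_eq_inv_GammaSeq (x : ℂ) (N : ℕ) :
    x * (∏ n ∈ Finset.range N, eulerFactor (1 / ((n : ℝ) + 1)) x) * (1 + 1 / ((N : ℂ) + 1) * x) =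
      (GammaSeq x (N + 1))⁻¹ := by
  rw [prod_eulerFactor (fun n _ => by positivity), prod_range_one_add_one_div_succ]
  calc x * ((∏ n ∈ Finset.range N, (1 + ((1 / ((n : ℝ) + 1) : ℝ) : ℂ) * x)) *
          ((N + 1 : ℝ) : ℂ) ^ (-x)) * (1 + 1 / ((N : ℂ) + 1) * x)
      = x * (∏ n ∈ Finset.range (N + 1), (1 + 1 / ((n : ℂ) + 1) * x)) *
          ((N : ℂ) + 1) ^ (-x) := by
        rw [Finset.prod_range_succ]
        push_cast
        ring
    _ = (GammaSeq x (N + 1))⁻¹ := by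
        rw [prod_range_one_add_one_div_succ_mul, GammaSeq, Finset.prod_range_succ' _ (N + 1),
          cpow_neg, inv_div]
        push_cast
        rw [add_zero]
        ring

lemma mul_tprod_eulerFactor_eq_inv_Gamma (x : ℂ) :
    x * ∏' n : ℕ, eulerFactor (1 / ((n : ℝ) + 1)) x = (Gamma x)⁻¹ := by
  by_cases hx : ∀ n : ℕ, x ≠ -n
  · have hprod : Tendsto (fun N : ℕ =>
        x * (∏ n ∈ Finset.range N, eulerFactor (1 / ((n : ℝ) + 1)) x) * (1 + 1 / ((N : ℂ) + 1) * x))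
        atTop (𝓝 (x * (∏' n : ℕ, eulerFactor (1 / ((n : ℝ) + 1)) x) * (1 + 0 * x))) :=
      ((multipliable_eulerFactor (fun n => by positivity) (fun _ => le_rfl)
        x).hasProd.tendsto_prod_nat.const_mul x).mul
        ((tendsto_one_div_add_atTop_nhds_zero_nat.mul_const x).const_add 1)
    have hGamma := ((GammaSeq_tendsto_Gamma x).inv₀ (Gamma_ne_zero hx)).comp
      (tendsto_add_atTop_nat 1)
    simp only [zero_mul, add_zero, mul_one] at hprod
    exact tendsto_nhds_unique hprod
      (hGamma.congr fun N => (mul_prod_eulerFactor_mul_eq_inv_GammaSeq x N).symm)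
  · push Not at hx
    obtain ⟨n, rfl⟩ := hx
    rw [Gamma_neg_nat_eq_zero, inv_zero, mul_eq_zero]
    rcases n with _ | n
    · simp
    · refine Or.inr (tprod_of_exists_eq_zero ⟨n, ?_⟩)
      have hn : (n : ℂ) + 1 ≠ 0 := n.cast_add_one_ne_zero
      rw [eulerFactor]
      push_cast
      rw [mul_neg, one_div_mul_cancel hn, add_neg_cancel, zero_mul]

/-! ### The `q`-Gamma function -/

/-- The `q`-analogue `[x]_q = (1 - q^x) / (1 - q)` of the number `x`. -/
noncomputable def qNumber (q : ℝ) (x : ℂ) : ℂ := (1 - (q : ℂ) ^ x) / (1 - q)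

/-- The weights `q^{n+1} / [n+1]_q` of the Euler factors of the `q`-Gamma function. Writing
`[n+1]_q` as a sum gives them their limiting value `1 / (n + 1)` at `q = 1`. -/
noncomputable def qWeight (q : ℝ) (n : ℕ) : ℝ :=
  q ^ (n + 1) / ∑ i ∈ Finset.range (n + 1), q ^ i

lemma qWeight_nonneg {q : ℝ} (hq : 0 ≤ q) (n : ℕ) : 0 ≤ qWeight q n :=
  div_nonneg (pow_nonneg hq _) (geom_sum_pos hq n.succ_ne_zero).le

lemma qWeight_le_one_div {q : ℝ} (hq₀ : 0 ≤ q) (hq₁ : q ≤ 1) (n : ℕ) :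
    qWeight q n ≤ 1 / ((n : ℝ) + 1) := by
  have hsum : ((n : ℝ) + 1) * q ^ (n + 1) ≤ ∑ i ∈ Finset.range (n + 1), q ^ i := by
    simpa using Finset.card_nsmul_le_sum (Finset.range (n + 1)) (q ^ ·) (q ^ (n + 1))
      fun i hi => pow_le_pow_of_le_one hq₀ hq₁ (Finset.mem_range.mp hi).le
  rw [qWeight, div_le_div_iff₀ (geom_sum_pos hq₀ n.succ_ne_zero) (by positivity)]
  linarith

lemma tendsto_qWeight (n : ℕ) : Tendsto (qWeight · n) (𝓝 1) (𝓝 (1 / ((n : ℝ) + 1))) := by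
  have hcont : ContinuousAt (qWeight · n) 1 :=
    ContinuousAt.div (by fun_prop) (by fun_prop) (geom_sum_pos zero_le_one n.succ_ne_zero).ne'
  simpa [ContinuousAt, qWeight] using hcont

lemma prod_range_one_add_qWeight {q : ℝ} (hq : 0 ≤ q) (N : ℕ) :
    ∏ n ∈ Finset.range N, (1 + qWeight q n) = ∑ i ∈ Finset.range (N + 1), q ^ i := by
  induction N with
  | zero => simp
  | succ N ih =>
    have hne := (geom_sum_pos hq N.succ_ne_zero).ne'
    rw [Finset.prod_range_succ, ih, qWeight, mul_one_add, mul_div_cancel₀ _ hne,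
      Finset.sum_range_succ _ (N + 1)]

lemma one_add_qWeight_mul_qNumber {q : ℝ} (hq₀ : 0 ≤ q) (hq₁ : q < 1) (x : ℂ) (n : ℕ) :
    1 + qWeight q n * qNumber q x = (1 - (q : ℂ) ^ x * q * q ^ n) / (1 - q * q ^ n) := by
  have hq : 1 - (q : ℂ) ≠ 0 := by exact_mod_cast (sub_pos.mpr hq₁).ne'
  have hpow : 1 - (q : ℂ) * q ^ n ≠ 0 := by
    rw [← pow_succ']
    exact_mod_cast (sub_pos.mpr (pow_lt_one₀ hq₀ hq₁ n.succ_ne_zero)).ne'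
  have hgeom : ∑ i ∈ Finset.range (n + 1), (q : ℂ) ^ i = (1 - q * q ^ n) / (1 - q) := by
    rw [eq_div_iff hq, geom_sum_mul_neg, pow_succ']
  rw [qWeight, qNumber]
  push_cast
  rw [hgeom]
  field_simp
  ring

/-- The `q`-Gamma function `Γ_q(x) = (q; q)_∞ / (q^x; q)_∞ · (1 - q)^{1 - x}`, for `0 < q < 1`. -/
noncomputable def qGamma (q : ℝ) (x : ℂ) : ℂ :=
  qPochhammer q q / qPochhammer ((q : ℂ) ^ x) q * ((1 - q : ℝ) : ℂ) ^ (1 - x)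

lemma tprod_eulerFactor_qWeight {q : ℝ} (hq₀ : 0 ≤ q) (hq₁ : q < 1) (x : ℂ) :
    ∏' n, eulerFactor (qWeight q n) (qNumber q x) =
      qPochhammer ((q : ℂ) ^ x * q) q / qPochhammer q q * ((1 - q : ℝ) : ℂ) ^ qNumber q x := by
  have hq : ‖(q : ℂ)‖ < 1 := by rwa [Complex.norm_real, Real.norm_of_nonneg hq₀]
  have hpos : 0 < 1 - q := sub_pos.mpr hq₁
  have hgeom : Tendsto (fun N => ((∑ i ∈ Finset.range (N + 1), q ^ i : ℝ) : ℂ) ^ (-qNumber q x))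
      atTop (𝓝 ((((1 - q)⁻¹ : ℝ) : ℂ) ^ (-qNumber q x))) := by
    have hslit : (((1 - q)⁻¹ : ℝ) : ℂ) ∈ slitPlane := ofReal_mem_slitPlane.mpr (inv_pos.mpr hpos)
    exact ((continuous_ofReal.tendsto _).comp ((hasSum_geometric_of_lt_one hq₀
      hq₁).tendsto_sum_nat.comp (tendsto_add_atTop_nat 1))).cpow tendsto_const_nhds hslit
  have hinv : (((1 - q)⁻¹ : ℝ) : ℂ) ^ (-qNumber q x) = ((1 - q : ℝ) : ℂ) ^ qNumber q x := by
    rw [ofReal_inv, inv_cpow_ofReal_nonneg hpos.le, cpow_neg, inv_inv]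
  rw [← hinv]
  refine tendsto_nhds_unique (multipliable_eulerFactor (qWeight_nonneg hq₀)
    (qWeight_le_one_div hq₀ hq₁.le) _).hasProd.tendsto_prod_nat ?_
  simp only [prod_eulerFactor (fun n _ => qWeight_nonneg hq₀ n), prod_range_one_add_qWeight hq₀,
    one_add_qWeight_mul_qNumber hq₀ hq₁, Finset.prod_div_distrib]
  exact ((multipliable_one_sub_mul_pow _ hq).hasProd.tendsto_prod_nat.div
    (multipliable_one_sub_mul_pow _ hq).hasProd.tendsto_prod_nat
    (qPochhammer_self_ne_zero hq)).mul hgeom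

lemma inv_qGamma_eq_mul_tprod_eulerFactor {q : ℝ} (hq₀ : 0 ≤ q) (hq₁ : q < 1) (x : ℂ) :
    (qGamma q x)⁻¹ = qNumber q x * (∏' n, eulerFactor (qWeight q n) (qNumber q x)) *
      ((1 - q : ℝ) : ℂ) ^ (x - qNumber q x) := by
  have hq : ‖(q : ℂ)‖ < 1 := by rwa [Complex.norm_real, Real.norm_of_nonneg hq₀]
  have hne : ((1 - q : ℝ) : ℂ) ≠ 0 := by exact_mod_cast (sub_pos.mpr hq₁).ne'
  have hcpow : (((1 - q : ℝ) : ℂ) ^ (1 - x))⁻¹ =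
      ((1 - q : ℝ) : ℂ) ^ qNumber q x * ((1 - q : ℝ) : ℂ) ^ (x - qNumber q x) / (1 - q) := by
    rw [← cpow_neg, ← cpow_add _ _ hne, add_sub_cancel, neg_sub, cpow_sub _ _ hne, cpow_one,
      ofReal_sub, ofReal_one]
  rw [qGamma, mul_inv, inv_div, hcpow, tprod_eulerFactor_qWeight hq₀ hq₁,
    qPochhammer_eq_one_sub_mul _ hq, qNumber]
  ring

lemma exp_sub_one_sub_isBigO_sq : (fun z : ℂ => exp z - 1 - z) =O[𝓝 0] fun z => z ^ 2 := by
  simpa [Finset.sum_range_succ, sub_sub] using exp_sub_sum_range_isBigO_pow 2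

lemma log_isBigO_one_sub : Real.log =O[𝓝 1] fun q => 1 - q := by
  simpa [Asymptotics.isBigO_neg_right] using
    (Real.hasDerivAt_log one_ne_zero).isBigO_sub.neg_right

lemma one_sub_mul_qNumber_sub {q : ℝ} (hq₀ : 0 < q) (hq₁ : q < 1) (x : ℂ) :
    ((1 - q : ℝ) : ℂ) * (qNumber q x - x) =
      (exp (Real.log q) - 1 - Real.log q) * x - (exp (Real.log q * x) - 1 - Real.log q * x) := by
  have hq : (q : ℂ) ≠ 0 := by exact_mod_cast hq₀.ne'
  have hsub : 1 - (q : ℂ) ≠ 0 := by exact_mod_cast (sub_pos.mpr hq₁).ne'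
  rw [qNumber, cpow_def_of_ne_zero hq, ← ofReal_log hq₀.le, ← ofReal_exp, Real.exp_log hq₀]
  push_cast
  field_simp
  ring

lemma tendsto_one_sub : Tendsto (fun q : ℝ => 1 - q) (𝓝[<] 1) (𝓝[>] 0) := by
  refine tendsto_nhdsWithin_iff.mpr ⟨?_, ?_⟩
  · exact tendsto_nhdsWithin_of_tendsto_nhds (Continuous.tendsto' (by fun_prop) _ _ (sub_self 1))
  · filter_upwards [self_mem_nhdsWithin] with q hq using Set.mem_Ioi.mpr (sub_pos.mpr hq)

lemma qNumber_sub_isBigO_one_sub (x : ℂ) :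
    (fun p : ℝ × ℂ => qNumber p.1 p.2 - p.2) =O[𝓝[<] 1 ×ˢ 𝓝 x] fun p => 1 - p.1 := by
  have hfst : Tendsto Prod.fst (𝓝[<] (1 : ℝ) ×ˢ 𝓝 x) (𝓝 1) :=
    tendsto_fst.mono_right nhdsWithin_le_nhds
  have hsnd : Tendsto Prod.snd (𝓝[<] (1 : ℝ) ×ˢ 𝓝 x) (𝓝 x) := tendsto_snd
  have hlog : Tendsto (fun p : ℝ × ℂ => (Real.log p.1 : ℂ)) (𝓝[<] 1 ×ˢ 𝓝 x) (𝓝 0) := by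
    simpa [Function.comp_def] using (continuous_ofReal.tendsto _).comp (hfst.log one_ne_zero)
  have hlogO : (fun p : ℝ × ℂ => (Real.log p.1 : ℂ)) =O[𝓝[<] 1 ×ˢ 𝓝 x] fun p => 1 - p.1 :=
    isBigO_ofReal_left.mpr (log_isBigO_one_sub.comp_tendsto hfst)
  have hmulO : (fun p : ℝ × ℂ => Real.log p.1 * p.2) =O[𝓝[<] 1 ×ˢ 𝓝 x] fun p => 1 - p.1 := by
    simpa using hlogO.mul (hsnd.isBigO_one ℝ)
  have hexp_log : (fun p : ℝ × ℂ => (exp (Real.log p.1) - 1 - Real.log p.1) * p.2)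
      =O[𝓝[<] 1 ×ˢ 𝓝 x] fun p => (1 - p.1) ^ 2 := by
    simpa using ((exp_sub_one_sub_isBigO_sq.comp_tendsto hlog).trans (hlogO.pow 2)).mul
      (hsnd.isBigO_one ℝ)
  have hexp_mul : (fun p : ℝ × ℂ => exp (Real.log p.1 * p.2) - 1 - Real.log p.1 * p.2)
      =O[𝓝[<] 1 ×ˢ 𝓝 x] fun p => (1 - p.1) ^ 2 :=
    (exp_sub_one_sub_isBigO_sq.comp_tendsto (by simpa using hlog.mul hsnd)).trans (hmulO.pow 2)
  have hinv : (fun p : ℝ × ℂ => (((1 - p.1)⁻¹ : ℝ) : ℂ)) =O[𝓝[<] 1 ×ˢ 𝓝 x]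
      fun p => (1 - p.1)⁻¹ := isBigO_ofReal_left.mpr (Asymptotics.isBigO_refl _ _)
  refine (hinv.mul (hexp_log.sub hexp_mul)).congr' ?_ ?_
  · filter_upwards [tendsto_fst.eventually (Ioo_mem_nhdsLT zero_lt_one)] with p ⟨hp₀, hp₁⟩
    have hne : ((1 - p.1 : ℝ) : ℂ) ≠ 0 := by exact_mod_cast (sub_pos.mpr hp₁).ne'
    rw [← one_sub_mul_qNumber_sub hp₀ hp₁, ofReal_inv, inv_mul_cancel_left₀ hne]
  · filter_upwards [tendsto_fst.eventually (Ioo_mem_nhdsLT zero_lt_one)] with p ⟨_, hp₁⟩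
    rw [sq, inv_mul_cancel_left₀ (sub_pos.mpr hp₁).ne']

lemma tendsto_qNumber (x : ℂ) :
    Tendsto (fun p : ℝ × ℂ => qNumber p.1 p.2) (𝓝[<] 1 ×ˢ 𝓝 x) (𝓝 x) := by
  simpa using ((qNumber_sub_isBigO_one_sub x).trans_tendsto
    ((tendsto_one_sub.mono_right nhdsWithin_le_nhds).comp tendsto_fst)).add tendsto_snd

lemma tendsto_one_sub_cpow_sub_qNumber (x : ℂ) :
    Tendsto (fun p : ℝ × ℂ => ((1 - p.1 : ℝ) : ℂ) ^ (p.2 - qNumber p.1 p.2))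
      (𝓝[<] 1 ×ˢ 𝓝 x) (𝓝 1) := by
  have hlog_mul : Tendsto (fun p : ℝ × ℂ => Real.log (1 - p.1) * (1 - p.1))
      (𝓝[<] 1 ×ˢ 𝓝 x) (𝓝 0) := by
    simpa [Function.comp_def] using
      (tendsto_log_mul_rpow_nhdsGT_zero one_pos).comp (tendsto_one_sub.comp tendsto_fst)
  have hexponent : Tendsto (fun p : ℝ × ℂ =>
      (Real.log (1 - p.1) : ℂ) * (p.2 - qNumber p.1 p.2)) (𝓝[<] 1 ×ˢ 𝓝 x) (𝓝 0) := by
    refine Asymptotics.IsBigO.trans_tendsto ?_ hlog_mul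
    refine (isBigO_ofReal_left.mpr (Asymptotics.isBigO_refl _ _)).mul ?_
    simpa only [neg_sub] using (qNumber_sub_isBigO_one_sub x).neg_left
  rw [← Complex.exp_zero]
  refine ((continuous_exp.tendsto _).comp hexponent).congr' ?_
  filter_upwards [tendsto_fst.eventually (Ioo_mem_nhdsLT zero_lt_one)] with p ⟨_, hp⟩
  have hpos : 0 < 1 - p.1 := sub_pos.mpr hp
  rw [Function.comp_apply, cpow_def_of_ne_zero (by exact_mod_cast hpos.ne'), ofReal_log hpos.le]

lemma tendsto_inv_qGamma (x : ℂ) :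
    Tendsto (fun p : ℝ × ℂ => (qGamma p.1 p.2)⁻¹) (𝓝[<] 1 ×ˢ 𝓝 x) (𝓝 (Gamma x)⁻¹) := by
  have hfst : Tendsto Prod.fst (𝓝[<] (1 : ℝ) ×ˢ 𝓝 x) (𝓝 1) :=
    tendsto_fst.mono_right nhdsWithin_le_nhds
  have hmem : ∀ᶠ p : ℝ × ℂ in 𝓝[<] 1 ×ˢ 𝓝 x, p.1 ∈ Set.Ioo 0 1 :=
    tendsto_fst.eventually (Ioo_mem_nhdsLT zero_lt_one)
  have hprod : Tendsto (fun p : ℝ × ℂ => ∏' n, eulerFactor (qWeight p.1 n) (qNumber p.1 p.2))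
      (𝓝[<] 1 ×ˢ 𝓝 x) (𝓝 (∏' n : ℕ, eulerFactor (1 / ((n : ℝ) + 1)) x)) :=
    tendsto_tprod_eulerFactor (hmem.mono fun _ hp => qWeight_nonneg hp.1.le)
      (hmem.mono fun _ hp => qWeight_le_one_div hp.1.le hp.2.le) (fun n => by positivity)
      (fun n => (tendsto_qWeight n).comp hfst) (tendsto_qNumber x)
  have hlim := ((tendsto_qNumber x).mul hprod).mul (tendsto_one_sub_cpow_sub_qNumber x)
  rw [mul_one, mul_tprod_eulerFactor_eq_inv_Gamma] at hlim
  refine hlim.congr' ?_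
  filter_upwards [hmem] with p ⟨hp₀, hp₁⟩
  exact (inv_qGamma_eq_mul_tprod_eulerFactor hp₀.le hp₁ p.2).symm

lemma tendsto_qGamma {x : ℂ} (hx : ∀ n : ℕ, x ≠ -n) :
    Tendsto (fun p : ℝ × ℂ => qGamma p.1 p.2) (𝓝[<] 1 ×ˢ 𝓝 x) (𝓝 (Gamma x)) := by
  simpa using (tendsto_inv_qGamma x).inv₀ (inv_ne_zero (Gamma_ne_zero hx))

/-! ### The quantum dilogarithm -/

open Function.Periodic in
lemma eta_eq_mul_qPochhammer (τ : ℂ) :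
    ModularForm.eta τ = qParam 24 τ * qPochhammer (qParam 1 τ) (qParam 1 τ) := by
  simp only [ModularForm.eta, qPochhammer, ModularForm.eta_q, pow_succ']

lemma exp_pi_mul_I_div_four_eq_sqrt_I : exp (Real.pi * I / 4) = Complex.sqrt I := by
  rw [Complex.sqrt, cpow_def_of_ne_zero I_ne_zero, log_I]
  ring_nf

open Function.Periodic in
lemma zetaBar_eq_qParam_div (b : ℂ) :
    zetaBar b = (Complex.sqrt I)⁻¹ * (qParam 24 (-1 / b ^ 2) / qParam 24 (b ^ 2)) := by
  rw [zetaBar, ← exp_pi_mul_I_div_four_eq_sqrt_I, qParam, qParam, ← Complex.exp_sub,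
    ← Complex.exp_neg, ← Complex.exp_add]
  push_cast
  ring_nf

lemma eta_neg_one_div_sq {b : ℂ} (hre : 0 < b.re) (hτ : 0 < (b ^ 2).im) :
    ModularForm.eta (-1 / b ^ 2) = (Complex.sqrt I)⁻¹ * b * ModularForm.eta (b ^ 2) := by
  have heta := ModularForm.eta_comp_eq_csqrt_I_inv hτ
  have hsqrt : Complex.sqrt (b ^ 2) = b := by
    rw [Complex.sqrt, sq_cpow_two_inv hre]
  simp only [Function.comp_apply, Pi.smul_apply, Pi.mul_apply, smul_eq_mul, hsqrt] at heta
  rw [heta, mul_assoc]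

lemma sqrt_I_inv_mul_self : (Complex.sqrt I)⁻¹ * (Complex.sqrt I)⁻¹ = -I := by
  rw [← mul_inv, ← sq, Complex.sqrt, cpow_ofNat_inv_pow, inv_I]

open Function.Periodic in
lemma zetaBar_eq_mul_qPochhammer_div {b : ℂ} (hre : 0 < b.re) (hτ : 0 < (b ^ 2).im) :
    zetaBar b = -I * b * (qPochhammer (qParam 1 (b ^ 2)) (qParam 1 (b ^ 2)) /
      qPochhammer (qParam 1 (-1 / b ^ 2)) (qParam 1 (-1 / b ^ 2))) := by
  have hinv : 0 < (-1 / b ^ 2).im := by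
    simpa using UpperHalfPlane.im_pnat_div_pos 1 ⟨b ^ 2, hτ⟩
  have hne := qPochhammer_self_ne_zero (norm_qParam_lt_one one_pos hinv)
  have heta := eta_neg_one_div_sq hre hτ
  rw [eta_eq_mul_qPochhammer, eta_eq_mul_qPochhammer, ← eq_div_iff hne] at heta
  have hqParam : qParam 24 (b ^ 2) ≠ 0 := qParam_ne_zero _
  rw [zetaBar_eq_qParam_div, heta, ← sqrt_I_inv_mul_self]
  field_simp

open Function.Periodic in
lemma Gb_mul_eq {b : ℂ} (hb : b ≠ 0) (x : ℂ) :
    Gb b (b * x) = zetaBar b *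
      qPochhammer (exp (2 * Real.pi * I * x) * qParam 1 (-1 / b ^ 2)) (qParam 1 (-1 / b ^ 2)) /
      qPochhammer (exp (2 * Real.pi * I * b ^ 2 * x)) (qParam 1 (b ^ 2)) := by
  rw [Gb, qPochhammer, qPochhammer]
  refine congrArg₂ _ (congrArg _ (tprod_congr fun n => ?_)) (tprod_congr fun n => ?_)
  · rw [qParam, ← Complex.exp_nat_mul, ← Complex.exp_add, ← Complex.exp_add]
    congr 2
    push_cast
    field_simp
    ring
  · rw [qParam, ← Complex.exp_nat_mul, ← Complex.exp_add]
    congr 2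
    push_cast
    ring

lemma br_sq {r : ℝ} (hr : 0 ≤ r) : br r ^ 2 = I * r := by
  rw [br, mul_pow, exp_pi_mul_I_div_four_eq_sqrt_I, Complex.sqrt, cpow_ofNat_inv_pow,
    ← ofReal_pow, Real.sq_sqrt hr]

lemma re_br_pos {r : ℝ} (hr : 0 < r) : 0 < (br r).re := by
  rw [br, re_mul_ofReal, mul_div_right_comm, ← ofReal_ofNat, ← ofReal_div, exp_ofReal_mul_I_re,
    Real.cos_pi_div_four]
  positivity

lemma im_br_sq_pos {r : ℝ} (hr : 0 < r) : 0 < (br r ^ 2).im := by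
  simpa [br_sq hr.le] using hr

lemma qParam_br_sq {r : ℝ} (hr : 0 ≤ r) :
    Function.Periodic.qParam 1 (br r ^ 2) = (Real.exp (-(2 * Real.pi * r)) : ℝ) := by
  rw [Function.Periodic.qParam, br_sq hr, ofReal_exp]
  congr 1
  push_cast
  linear_combination 2 * Real.pi * r * I_mul_I

lemma qParam_neg_one_div_br_sq {r : ℝ} (hr : 0 < r) :
    Function.Periodic.qParam 1 (-1 / br r ^ 2) = exp (-(2 * Real.pi / r)) := by
  have hne : (r : ℂ) ≠ 0 := by exact_mod_cast hr.ne'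
  rw [Function.Periodic.qParam, br_sq hr.le]
  congr 1
  push_cast
  field_simp

lemma cpow_one_sub_mul_div_cpow_sub_one {s t : ℝ} (hs : 0 < s) (ht : 0 < t) (x : ℂ) :
    (s : ℂ) ^ (1 - x) * ((s / t : ℝ) : ℂ) ^ (x - 1) = t / (t : ℂ) ^ x := by
  have hs' : (s : ℂ) ≠ 0 := by exact_mod_cast hs.ne'
  have ht' : (t : ℂ) ≠ 0 := by exact_mod_cast ht.ne'
  rw [ofReal_div, div_cpow_ofReal_nonneg hs.le ht.le, ← mul_div_assoc, ← cpow_add _ _ hs',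
    sub_add_sub_cancel', sub_self, cpow_zero, cpow_sub _ _ ht', cpow_one, one_div_div]

lemma two_pi_mul_br_mul_Gb_div_cpow_eq {r : ℝ} (hr : 0 < r) (x : ℂ) :
    2 * Real.pi * br r * Gb (br r) (br r * x) / ((2 * Real.pi * r : ℝ) : ℂ) ^ x =
      qGamma (Real.exp (-(2 * Real.pi * r))) x *
        (((1 - Real.exp (-(2 * Real.pi * r))) / (2 * Real.pi * r) : ℝ) : ℂ) ^ (x - 1) *
        (qPochhammer (exp (2 * Real.pi * I * x) * exp (-(2 * Real.pi / r)))
            (exp (-(2 * Real.pi / r))) /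
          qPochhammer (exp (-(2 * Real.pi / r))) (exp (-(2 * Real.pi / r)))) := by
  have hre := re_br_pos hr
  have hbr : br r ≠ 0 := fun h => by simp [h] at hre
  have ht : 0 < 2 * Real.pi * r := by positivity
  have hq : 0 < 1 - Real.exp (-(2 * Real.pi * r)) :=
    sub_pos.mpr (Real.exp_lt_one_iff.mpr (neg_lt_zero.mpr ht))
  have hexp : exp (2 * Real.pi * I * br r ^ 2 * x) =
      ((Real.exp (-(2 * Real.pi * r)) : ℝ) : ℂ) ^ x := by
    rw [br_sq hr.le, cpow_def_of_ne_zero (by exact_mod_cast (Real.exp_pos _).ne'),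
      ← ofReal_log (Real.exp_pos _).le, Real.log_exp]
    congr 1
    push_cast
    linear_combination 2 * Real.pi * r * x * I_mul_I
  have hmul : 2 * Real.pi * br r * (-I * br r) = (2 * Real.pi * r : ℝ) := by
    push_cast
    linear_combination -2 * Real.pi * I * br_sq hr.le - 2 * Real.pi * r * I_mul_I
  have hcpow := cpow_one_sub_mul_div_cpow_sub_one hq ht x
  rw [Gb_mul_eq hbr, zetaBar_eq_mul_qPochhammer_div hre (im_br_sq_pos hr), qParam_br_sq hr.le,
    qParam_neg_one_div_br_sq hr, hexp, qGamma]
  set q := ((Real.exp (-(2 * Real.pi * r)) : ℝ) : ℂ)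
  set q' := exp (-(2 * Real.pi / r) : ℂ)
  linear_combination (qPochhammer q q / qPochhammer q' q' *
    qPochhammer (exp (2 * Real.pi * I * x) * q') q' / qPochhammer (q ^ x) q) *
      (hmul / ((2 * Real.pi * r : ℝ) : ℂ) ^ x - hcpow)

lemma tendsto_exp_neg_two_pi_div :
    Tendsto (fun r : ℝ => exp (-(2 * Real.pi / r))) (𝓝[>] 0) (𝓝 0) := by
  have hreal : Tendsto (fun r : ℝ => Real.exp (-(2 * Real.pi / r))) (𝓝[>] 0) (𝓝 0) :=
    Real.tendsto_exp_neg_atTop_nhds_zero.comp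
      (tendsto_inv_nhdsGT_zero.const_mul_atTop Real.two_pi_pos)
  exact_mod_cast (continuous_ofReal.tendsto 0).comp hreal

lemma tendsto_one_sub_exp_neg_div :
    Tendsto (fun t : ℝ => (1 - Real.exp (-t)) / t) (𝓝[≠] 0) (𝓝 1) := by
  have hderiv : HasDerivAt (fun t : ℝ => 1 - Real.exp (-t)) 1 0 := by
    simpa using (hasDerivAt_neg (0 : ℝ)).exp.const_sub 1
  simpa [div_eq_inv_mul] using hderiv.tendsto_slope_zero

lemma tendsto_one_sub_exp_neg_div_cpow {α : Type*} {l : Filter α} {t : α → ℝ} {z : α → ℂ}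
    {z₀ : ℂ} (ht : Tendsto t l (𝓝[≠] 0)) (hz : Tendsto z l (𝓝 z₀)) :
    Tendsto (fun i => (((1 - Real.exp (-t i)) / t i : ℝ) : ℂ) ^ z i) l (𝓝 1) := by
  have hbase : Tendsto (fun i => (((1 - Real.exp (-t i)) / t i : ℝ) : ℂ)) l (𝓝 1) :=
    (continuous_ofReal.tendsto' 1 1 ofReal_one).comp (tendsto_one_sub_exp_neg_div.comp ht)
  simpa using hbase.cpow hz one_mem_slitPlane

lemma tendsto_two_pi_mul : Tendsto (fun r : ℝ => 2 * Real.pi * r) (𝓝[>] 0) (𝓝[>] 0) := by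
  refine tendsto_nhdsWithin_iff.mpr ⟨?_, ?_⟩
  · exact tendsto_nhdsWithin_of_tendsto_nhds (Continuous.tendsto' (by fun_prop) _ _ (by simp))
  · filter_upwards [self_mem_nhdsWithin] with r hr using mul_pos Real.two_pi_pos hr

lemma tendsto_exp_neg : Tendsto (fun t : ℝ => Real.exp (-t)) (𝓝[>] 0) (𝓝[<] 1) := by
  refine tendsto_nhdsWithin_iff.mpr ⟨?_, ?_⟩
  · exact tendsto_nhdsWithin_of_tendsto_nhds (Continuous.tendsto' (by fun_prop) _ _ (by simp))
  · filter_upwards [self_mem_nhdsWithin] with t ht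
    exact Real.exp_lt_one_iff.mpr (neg_lt_zero.mpr ht)

lemma tendsto_two_pi_mul_br_mul_Gb_div_cpow {x : ℂ} (hx : ∀ n : ℕ, x ≠ -n) :
    Tendsto (fun p : ℝ × ℂ => 2 * Real.pi * br p.1 * Gb (br p.1) (br p.1 * p.2) /
      ((2 * Real.pi * p.1 : ℝ) : ℂ) ^ p.2) (𝓝[>] 0 ×ˢ 𝓝 x) (𝓝 (Gamma x)) := by
  have ht : Tendsto (fun p : ℝ × ℂ => 2 * Real.pi * p.1) (𝓝[>] 0 ×ˢ 𝓝 x) (𝓝[>] 0) :=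
    tendsto_two_pi_mul.comp tendsto_fst
  have hsnd : Tendsto (fun p : ℝ × ℂ => p.2) (𝓝[>] 0 ×ˢ 𝓝 x) (𝓝 x) := tendsto_snd
  have hqGamma := (tendsto_qGamma hx).comp ((tendsto_exp_neg.comp ht).prodMk hsnd)
  have hcpow := tendsto_one_sub_exp_neg_div_cpow (ht.mono_right (nhdsGT_le_nhdsNE 0))
    (hsnd.sub_const 1)
  have hratio := tendsto_qPochhammer_mul_div_self (hsnd.const_mul (2 * Real.pi * I)).cexp
    (tendsto_exp_neg_two_pi_div.comp tendsto_fst)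
  have hlim := (hqGamma.mul hcpow).mul hratio
  rw [mul_one, mul_one] at hlim
  refine hlim.congr' ?_
  filter_upwards [tendsto_fst.eventually self_mem_nhdsWithin] with p hp
  exact (two_pi_mul_br_mul_Gb_div_cpow_eq hp p.2).symm

lemma tendstoUniformlyOn_of_tendsto_prod_nhds {ι X Y : Type*} [TopologicalSpace X]
    [UniformSpace Y] {F : ι → X → Y} {f : X → Y} {l : Filter ι} {K : Set X} (hK : IsCompact K)
    (hf : ContinuousOn f K)
    (hF : ∀ x ∈ K, Tendsto (fun p : ι × X => F p.1 p.2) (l ×ˢ 𝓝 x) (𝓝 (f x))) :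
    TendstoUniformlyOn F f l K := by
  rw [← tendstoLocallyUniformlyOn_iff_tendstoUniformlyOn_of_compact hK,
    tendstoLocallyUniformlyOn_iff_forall_tendsto]
  intro x hx
  have hlim := (hF x hx).mono_left (prod_mono_right l (nhdsWithin_le_nhds (s := K)))
  exact (((hf x hx).tendsto.comp tendsto_snd).prodMk_nhds hlim).mono_right (nhds_le_uniformity _)

/-- For `x ∉ {0, −1, −2, …}`,
`lim_{r→0⁺} (2π b(r)) G_{b(r)}(b(r) x) / (2πr)^x = Γ(x)`,
uniformly on compact subsets of `ℂ ∖ {0, −1, −2, …}`. -/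
theorem stmt0 :
    (∀ x : ℂ, (∀ n : ℕ, x ≠ -(n : ℂ)) →
      Tendsto
        (fun r : ℝ =>
          2 * (Real.pi : ℂ) * br r * Gb (br r) (br r * x) / ((2 * Real.pi * r : ℝ) : ℂ) ^ x)
        (𝓝[>] (0 : ℝ)) (𝓝 (Complex.Gamma x))) ∧
    (∀ K : Set ℂ, IsCompact K → (∀ x ∈ K, ∀ n : ℕ, x ≠ -(n : ℂ)) →
      TendstoUniformlyOn
        (fun r : ℝ => fun x : ℂ =>
          2 * (Real.pi : ℂ) * br r * Gb (br r) (br r * x) / ((2 * Real.pi * r : ℝ) : ℂ) ^ x)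
        Complex.Gamma (𝓝[>] (0 : ℝ)) K) := by
  refine ⟨fun x hx => ?_, fun K hK hKx => ?_⟩
  · simpa only [Function.comp_def, id] using (tendsto_two_pi_mul_br_mul_Gb_div_cpow hx).comp
      (tendsto_id.prodMk (tendsto_const_nhds (x := x)))
  · have hGamma : ContinuousOn Gamma K := fun x hx =>
      (differentiableAt_Gamma x (hKx x hx)).continuousAt.continuousWithinAt
    exact tendstoUniformlyOn_of_tendsto_prod_nhds hK hGamma fun x hx =>
      tendsto_two_pi_mul_br_mul_Gb_div_cpow (hKx x hx)
end

section
/- The following limit holds: lim_{r→0⁺} e^{(πr − π/r)/12} / ( √r · ∏_{n=1}^∞ (1 − e^{−2πrn}) ) = 1. -/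
open Filter Topology

/-! Up to the factor `q ^ (1 / 24)` the product is the Dedekind eta function at `i s`, so the
inversion formula `η (i / s) = √s η (i s)` trades the nome `e ^ (-2π s)`, which degenerates as
`s → 0`, for `e ^ (-2π / s)`. The quotient thereby becomes exactly the inverse of the same product
at `e ^ (-2π / s)`, and this nome tends to `0`, where the product is continuous with value `1`. -/

section

open Complex ModularForm

open scoped Real

lemma mul_cpow_of_arg_add_arg_mem {z w : ℂ} (h : arg z + arg w ∈ Set.Ioc (-π) π) (a : ℂ) :
    (z * w) ^ a = z ^ a * w ^ a := by
  rcases eq_or_ne a 0 with rfl | ha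
  · simp
  rcases eq_or_ne z 0 with rfl | hz
  · simp [ha]
  rcases eq_or_ne w 0 with rfl | hw
  · simp [ha]
  rw [cpow_def_of_ne_zero (mul_ne_zero hz hw), log_mul hz hw h, add_mul, exp_add,
    ← cpow_def_of_ne_zero hz, ← cpow_def_of_ne_zero hw]

lemma csqrt_I_mul {s : ℂ} (hs : 0 ≤ s.re) : sqrt (I * s) = sqrt I * sqrt s := by
  have harg : |arg s| ≤ π / 2 := abs_arg_le_pi_div_two_iff.mpr hs
  refine mul_cpow_of_arg_add_arg_mem ?_ _
  rw [arg_I]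
  constructor <;> linarith [abs_le.mp harg, Real.pi_pos]

lemma eta_I_mul_inv {s : ℂ} (hs : 0 < s.re) : η (I * s⁻¹) = sqrt s * η (I * s) := by
  have hmem : I * s ∈ UpperHalfPlane.upperHalfPlaneSet := by simpa using hs
  have hinv : -1 / (I * s) = I * s⁻¹ := by
    rw [neg_div, one_div, mul_inv, inv_I, neg_mul, neg_neg]
  have hI : sqrt I ≠ 0 := by simp [sqrt]
  have h := eta_comp_eq_csqrt_I_inv hmem
  simp only [Function.comp_apply, Pi.smul_apply, Pi.mul_apply, smul_eq_mul] at h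
  rw [← hinv, h, csqrt_I_mul hs.le, mul_assoc, inv_mul_cancel_left₀ hI]

/-- The Euler function `φ(q) = ∏_{n ≥ 1} (1 - qⁿ) = (q; q)_∞`, which carries the asymptotics of
the Dedekind eta function at the cusp `0`. The product is indexed from `n = 0`. -/
noncomputable def eulerFunction (q : ℂ) : ℂ := ∏' n : ℕ, (1 - q ^ (n + 1))

lemma tendsto_eulerFunction_zero : Tendsto eulerFunction (𝓝 0) (𝓝 1) := by
  have hcont : ContinuousAt eulerFunction 0 :=
    (differentiableOn_tprod_one_sub_pow.differentiableAt
      (Metric.ball_mem_nhds 0 one_pos)).continuousAt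
  simpa [eulerFunction] using hcont.tendsto

lemma eulerFunction_exp (z : ℂ) : eulerFunction (exp z) = ∏' n : ℕ, (1 - exp (z * (n + 1))) := by
  refine tprod_congr fun n ↦ ?_
  rw [← exp_nat_mul, Nat.cast_add_one, mul_comm]

lemma eta_I_mul (s : ℂ) : η (I * s) = exp (-(π * s) / 12) * eulerFunction (exp (-2 * π * s)) := by
  have hqParam (h : ℝ) : Function.Periodic.qParam h (I * s) = exp (-2 * π * s / h) := by
    rw [Function.Periodic.qParam]
    congr 2
    linear_combination 2 * π * s * I_mul_I
  rw [ModularForm.eta, eulerFunction]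
  simp only [eta_q, hqParam, ofReal_one, div_one]
  congr 2
  push_cast
  ring

lemma sqrt_mul_eulerFunction_exp {s : ℂ} (hs : 0 < s.re) :
    sqrt s * eulerFunction (exp (-2 * π * s)) =
      exp ((π * s - π / s) / 12) * eulerFunction (exp (-2 * π * s⁻¹)) := by
  have hexp : exp ((π * s - π / s) / 12) = exp (-(π * s⁻¹) / 12) / exp (-(π * s) / 12) := by
    rw [← exp_sub]
    ring_nf
  have heta := eta_I_mul_inv hs
  rw [eta_I_mul, eta_I_mul, mul_left_comm] at heta
  rw [hexp, div_mul_eq_mul_div, heta, mul_div_cancel_left₀ _ (exp_ne_zero _)]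

lemma tendsto_exp_neg_two_pi_mul_inv :
    Tendsto (fun s : ℂ ↦ exp (-2 * π * s⁻¹)) (comap (fun s ↦ s⁻¹.re) atTop) (𝓝 0) := by
  refine tendsto_exp_comap_re_atBot.comp (tendsto_comap_iff.mpr ?_)
  have hre : (re ∘ fun s : ℂ ↦ -2 * π * s⁻¹) = fun s ↦ -2 * π * s⁻¹.re := by
    ext s
    exact_mod_cast re_ofReal_mul (-2 * π) s⁻¹
  rw [hre]
  exact tendsto_comap.const_mul_atTop_of_neg (by linarith [Real.pi_pos])

lemma inv_re_pos_iff {s : ℂ} : 0 < s⁻¹.re ↔ 0 < s.re := by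
  rcases eq_or_ne s 0 with rfl | hs
  · simp
  · rw [inv_re, div_pos_iff_of_pos_right (normSq_pos.mpr hs)]

-- The sets `{s | c < s⁻¹.re}`, `c > 0`, are the discs tangent to the imaginary axis at `0`, so the
-- filter allows every approach to the cusp through horocyclic neighbourhoods.
theorem stmt2_general :
    Tendsto
      (fun s : ℂ ↦
        exp ((π * s - π / s) / 12) / (sqrt s * ∏' n : ℕ, (1 - exp (-2 * π * s * (n + 1)))))
      (comap (fun s ↦ s⁻¹.re) atTop) (𝓝 1) := by
  have hlim : Tendsto (fun s : ℂ ↦ (eulerFunction (exp (-2 * π * s⁻¹)))⁻¹)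
      (comap (fun s ↦ s⁻¹.re) atTop) (𝓝 1) := by
    simpa using (tendsto_eulerFunction_zero.comp tendsto_exp_neg_two_pi_mul_inv).inv₀ one_ne_zero
  refine hlim.congr' ?_
  filter_upwards [tendsto_comap.eventually_gt_atTop 0] with s hs
  rw [← eulerFunction_exp, sqrt_mul_eulerFunction_exp (inv_re_pos_iff.mp hs),
    div_mul_cancel_left₀ (exp_ne_zero _)]

lemma ofReal_tprod {ι : Type*} (f : ι → ℝ) : ((∏' i, f i : ℝ) : ℂ) = ∏' i, (f i : ℂ) :=
  Function.LeftInverse.map_tprod (g := ofRealHom) f continuous_ofReal continuous_re ofReal_re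

lemma tendsto_ofReal_nhdsGT_zero_comap_inv_re :
    Tendsto ofReal (𝓝[>] 0) (comap (fun s ↦ s⁻¹.re) atTop) :=
  tendsto_comap_iff.mpr <| tendsto_inv_nhdsGT_zero.congr fun r ↦ by
    rw [Function.comp_apply, ← ofReal_inv, ofReal_re]

lemma csqrt_ofReal {r : ℝ} (hr : 0 ≤ r) : sqrt (r : ℂ) = (√r : ℝ) := by
  rw [sqrt_of_nonneg (mod_cast hr), ofReal_re]

end

/-- `lim_{r→0⁺} e^{(πr − π/r)/12} / (√r · ∏_{n=1}^∞ (1 − e^{−2πrn})) = 1`. -/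
theorem stmt2 :
    Tendsto
      (fun r : ℝ =>
        Real.exp ((Real.pi * r - Real.pi / r) / 12) /
          (Real.sqrt r * ∏' n : ℕ, (1 - Real.exp (-2 * Real.pi * r * (n + 1)))))
      (𝓝[>] (0 : ℝ)) (𝓝 1) := by
  refine tendsto_ofReal_iff.mp <|
    (stmt2_general.comp tendsto_ofReal_nhdsGT_zero_comap_inv_re).congr' <|
      eventually_nhdsWithin_of_forall fun r hr ↦ ?_
  simp [csqrt_ofReal (Set.mem_Ioi.mp hr).le, ofReal_tprod]
end

section
/- Let b ∈ ℂ with Im(b²) > 0 and Q = b + b^{−1}. For every x ∈ ℂ at which both G_b(x) and G_b(Q − x) are defined, one has the reflection property G_b(x) · G_b(Q − x) = e^{πi x (x − Q)}. -/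
open Complex Filter Topology

/-!
The product `G_b(x) G_b(Q - x)` is `ζ̄_b²` times a quotient of two theta functions
`θ(z; q) = (z; q)_∞ (q / z; q)_∞`, of moduli `-1 / b²` and `b²`. By the Jacobi triple product, `θ`
is up to an exponential factor the quotient of `jacobiTheta₂` by the Dedekind eta function. Under
`τ ↦ -1 / τ` the square roots in the two transformation laws cancel, and only a Gaussian remains.

The triple product is the limit of its finite form, an expansion of `(z; q)_M (q / z; q)_N`. A
`q`-Pascal identity raises `M`, and the symmetry exchanging `z` with `q / z` and `M` with `N` takes
care of `N`.
-/

open scoped Real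

namespace QuantumDilogarithm

section FiniteTripleProduct

/-- The finite `q`-Pochhammer symbol `(a; q)_n`. -/
def qPochhammer {R : Type*} [CommRing R] (a q : R) (n : ℕ) : R :=
  ∏ j ∈ Finset.range n, (1 - a * q ^ j)

lemma qPochhammer_zero {R : Type*} [CommRing R] (a q : R) : qPochhammer a q 0 = 1 := rfl

lemma qPochhammer_succ {R : Type*} [CommRing R] (a q : R) (n : ℕ) :
    qPochhammer a q (n + 1) = qPochhammer a q n * (1 - a * q ^ n) :=
  Finset.prod_range_succ _ _

variable {K : Type*} [Field K] {q z : K}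

/-- The coefficient `1 / (q; q)_k` of the `q`-exponential series, extended by zero to negative `k`
so that its recursion holds on all of `ℤ`. -/
def qExpCoeff (q : K) : ℤ → K
  | Int.ofNat n => (qPochhammer q q n)⁻¹
  | Int.negSucc _ => 0

lemma qExpCoeff_natCast (q : K) (n : ℕ) : qExpCoeff q n = (qPochhammer q q n)⁻¹ := rfl

lemma qExpCoeff_of_neg (q : K) {k : ℤ} (hk : k < 0) : qExpCoeff q k = 0 := by
  obtain ⟨n, rfl⟩ := Int.eq_negSucc_of_lt_zero hk
  rfl

lemma qExpCoeff_eq_mul_add_one (hq : ∀ n : ℕ, q ^ (n + 1) ≠ 1) (k : ℤ) :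
    qExpCoeff q k = (1 - q ^ (k + 1)) * qExpCoeff q (k + 1) := by
  rcases lt_trichotomy k (-1) with hk | rfl | hk
  · rw [qExpCoeff_of_neg q (by lia : k < 0), qExpCoeff_of_neg q (by lia : k + 1 < 0), mul_zero]
  · rw [qExpCoeff_of_neg q (by lia : (-1 : ℤ) < 0), neg_add_cancel, zpow_zero, sub_self, zero_mul]
  · lift k to ℕ using by lia
    have hfactor : 1 - q ^ (k + 1) ≠ 0 := sub_ne_zero.mpr (hq k).symm
    rw [← Nat.cast_succ, zpow_natCast, qExpCoeff_natCast, qExpCoeff_natCast, qPochhammer_succ,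
      ← pow_succ', mul_inv, mul_left_comm, mul_inv_cancel₀ hfactor, mul_one]

lemma qExpCoeff_pascal (hq₀ : q ≠ 0) (hq : ∀ n : ℕ, q ^ (n + 1) ≠ 1) (m n : ℤ) :
    qExpCoeff q n * qExpCoeff q m +
        q ^ (m + 1) * (qExpCoeff q (n - 1) * qExpCoeff q (m + 1)) =
      (1 - q ^ (m + n + 1)) * (qExpCoeff q n * qExpCoeff q (m + 1)) := by
  have hn := qExpCoeff_eq_mul_add_one hq (n - 1)
  rw [sub_add_cancel] at hn
  rw [hn, qExpCoeff_eq_mul_add_one hq m, add_right_comm, zpow_add₀ hq₀ (m + 1) n]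
  ring

/-- The `k`-th term `(-1)^k q^{k(k-1)/2} z^k` of the theta series in multiplicative variables. -/
def qThetaTerm (z q : K) (k : ℤ) : K := (-z) ^ k * q ^ (k * (k - 1) / 2)

lemma qThetaTerm_add_one (hq₀ : q ≠ 0) (hz : z ≠ 0) (k : ℤ) :
    qThetaTerm z q (k + 1) = -z * q ^ k * qThetaTerm z q k := by
  have hexp : (k + 1) * (k + 1 - 1) / 2 = k * (k - 1) / 2 + k := by
    rw [← Int.add_mul_ediv_right _ _ two_ne_zero]
    ring_nf
  rw [qThetaTerm, qThetaTerm, hexp, zpow_add₀ hq₀, zpow_add_one₀ (neg_ne_zero.mpr hz)]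
  ring

lemma qThetaTerm_div_left (hq₀ : q ≠ 0) (z : K) (k : ℤ) :
    qThetaTerm (q / z) q k = qThetaTerm z q (-k) := by
  have hexp : -k * (-k - 1) / 2 = k * (k - 1) / 2 + k := by
    rw [← Int.add_mul_ediv_right _ _ two_ne_zero]
    ring_nf
  rw [qThetaTerm, qThetaTerm, hexp, zpow_add₀ hq₀, ← div_neg, div_zpow, zpow_neg]
  ring

/-- The `k`-th term of the expansion of `(z; q)_M (q / z; q)_N / (q; q)_{M + N}` in powers of `z`;
it vanishes unless `-N ≤ k ≤ M`. -/
def finiteThetaTerm (z q : K) (M N : ℕ) (k : ℤ) : K :=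
  qThetaTerm z q k * (qExpCoeff q (N + k) * qExpCoeff q (M - k))

lemma finiteThetaTerm_div_left (hq₀ : q ≠ 0) (z : K) (M N : ℕ) (k : ℤ) :
    finiteThetaTerm (q / z) q N M k = finiteThetaTerm z q M N (-k) := by
  rw [finiteThetaTerm, finiteThetaTerm, qThetaTerm_div_left hq₀, sub_neg_eq_add,
    ← sub_eq_add_neg, mul_comm (qExpCoeff q _)]

lemma finiteThetaTerm_succ (hq₀ : q ≠ 0) (hq : ∀ n : ℕ, q ^ (n + 1) ≠ 1) (hz : z ≠ 0)
    (M N : ℕ) (k : ℤ) :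
    (1 - q * q ^ (M + N)) * finiteThetaTerm z q (M + 1) N k =
      finiteThetaTerm z q M N k - z * q ^ M * finiteThetaTerm z q M N (k - 1) := by
  have hpascal := qExpCoeff_pascal hq₀ hq (M - k) (N + k)
  have htheta := qThetaTerm_add_one hq₀ hz (k - 1)
  have hpow : q ^ ((M : ℤ) - k + 1) * q ^ (k - 1) = q ^ M := by
    rw [← zpow_add₀ hq₀, ← zpow_natCast]
    ring_nf
  have hpow' : q ^ ((M : ℤ) - k + (N + k) + 1) = q * q ^ (M + N) := by
    rw [← pow_succ', ← zpow_natCast]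
    push_cast
    ring_nf
  rw [sub_add_cancel] at htheta
  rw [hpow', add_sub_assoc] at hpascal
  rw [finiteThetaTerm, finiteThetaTerm, finiteThetaTerm, ← hpow, Nat.cast_succ,
    ← sub_add, add_sub_right_comm, mul_left_comm, ← hpascal, htheta]
  ring

variable [TopologicalSpace K]

lemma hasSum_finiteThetaTerm_zero_zero (z q : K) : HasSum (finiteThetaTerm z q 0 0) 1 := by
  have hoff (k : ℤ) (hk : k ≠ 0) : finiteThetaTerm z q 0 0 k = 0 := by
    rcases hk.lt_or_gt with h | h
    · simp [finiteThetaTerm, qExpCoeff_of_neg q h]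
    · simp [finiteThetaTerm, qExpCoeff_of_neg q (neg_neg_of_pos h)]
  simpa [finiteThetaTerm, qThetaTerm, qExpCoeff, qPochhammer_zero] using hasSum_single 0 hoff

variable [IsTopologicalRing K]

lemma hasSum_finiteThetaTerm_succ (hq₀ : q ≠ 0) (hq : ∀ n : ℕ, q ^ (n + 1) ≠ 1) (hz : z ≠ 0)
    {M N : ℕ} {s : K} (hs : HasSum (finiteThetaTerm z q M N) s) :
    HasSum (finiteThetaTerm z q (M + 1) N) (s * (1 - z * q ^ M) / (1 - q * q ^ (M + N))) := by
  have hne : 1 - q * q ^ (M + N) ≠ 0 := by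
    rw [← pow_succ']
    exact sub_ne_zero.mpr (hq _).symm
  have hshift : HasSum (fun k ↦ z * q ^ M * finiteThetaTerm z q M N (k - 1)) (z * q ^ M * s) :=
    ((Equiv.subRight (1 : ℤ)).hasSum_iff.mpr hs).mul_left _
  rw [mul_one_sub, mul_comm s]
  refine ((hs.sub hshift).div_const (1 - q * q ^ (M + N))).congr_fun fun k ↦ ?_
  rw [eq_div_iff hne, mul_comm, finiteThetaTerm_succ hq₀ hq hz]

lemma hasSum_finiteThetaTerm_of_zero (hq₀ : q ≠ 0) (hq : ∀ n : ℕ, q ^ (n + 1) ≠ 1) (hz : z ≠ 0)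
    {N : ℕ} {s : K} (hs : HasSum (finiteThetaTerm z q 0 N) (s / qPochhammer q q N)) (M : ℕ) :
    HasSum (finiteThetaTerm z q M N) (qPochhammer z q M * s / qPochhammer q q (M + N)) := by
  induction M with
  | zero => rwa [qPochhammer_zero, one_mul, zero_add]
  | succ M ih =>
    rw [qPochhammer_succ, add_right_comm, qPochhammer_succ, ← div_div, mul_right_comm,
      mul_div_right_comm]
    exact hasSum_finiteThetaTerm_succ hq₀ hq hz ih

theorem hasSum_finiteThetaTerm (hq₀ : q ≠ 0) (hq : ∀ n : ℕ, q ^ (n + 1) ≠ 1) (hz : z ≠ 0)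
    (M N : ℕ) :
    HasSum (finiteThetaTerm z q M N)
      (qPochhammer z q M * qPochhammer (q / z) q N / qPochhammer q q (M + N)) := by
  have hflip : HasSum (finiteThetaTerm (q / z) q N 0)
      (qPochhammer (q / z) q N * 1 / qPochhammer q q (N + 0)) :=
    hasSum_finiteThetaTerm_of_zero hq₀ hq (div_ne_zero hq₀ hz)
      (by simpa [qPochhammer_zero] using hasSum_finiteThetaTerm_zero_zero (q / z) q) N
  rw [mul_one, add_zero, ← (Equiv.neg ℤ).hasSum_iff] at hflip
  refine hasSum_finiteThetaTerm_of_zero hq₀ hq hz (hflip.congr_fun fun k ↦ ?_) M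
  rw [Function.comp_apply, Equiv.neg_apply, finiteThetaTerm_div_left hq₀, neg_neg]

end FiniteTripleProduct

section TripleProduct

variable {𝕜 : Type*} [NormedField 𝕜] {q z : 𝕜}

/-- The infinite `q`-Pochhammer symbol `(a; q)_∞`. -/
noncomputable def qPochhammerInf (a q : 𝕜) : 𝕜 := ∏' n : ℕ, (1 - a * q ^ n)

/-- The modified Jacobi theta function `θ(z; q) = (z; q)_∞ (q / z; q)_∞`. -/
noncomputable def qTheta (z q : 𝕜) : 𝕜 := qPochhammerInf z q * qPochhammerInf (q / z) q

lemma pow_succ_ne_one_of_norm_lt_one (hq : ‖q‖ < 1) (n : ℕ) : q ^ (n + 1) ≠ 1 := fun h ↦ by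
  have hlt := pow_lt_one₀ (norm_nonneg q) hq n.succ_ne_zero
  rw [← norm_pow, h, norm_one] at hlt
  exact lt_irrefl _ hlt

lemma summable_norm_neg_mul_pow (hq : ‖q‖ < 1) (a : 𝕜) : Summable fun n : ℕ ↦ ‖-(a * q ^ n)‖ := by
  simpa only [norm_neg, norm_mul, norm_pow] using
    (summable_geometric_of_lt_one (norm_nonneg q) hq).mul_left ‖a‖

lemma summable_norm_qThetaTerm_natCast (hq₀ : q ≠ 0) (hq : ‖q‖ < 1) (hz : z ≠ 0) :
    Summable fun n : ℕ ↦ ‖qThetaTerm z q n‖ := by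
  have hratio : Tendsto (fun n : ℕ ↦ ‖-z * q ^ n‖) atTop (𝓝 0) := by
    simpa using ((tendsto_pow_atTop_nhds_zero_of_norm_lt_one hq).const_mul (-z)).norm
  refine summable_of_ratio_norm_eventually_le one_half_lt_one ?_
  filter_upwards [hratio.eventually_le_const one_half_pos] with n hn
  rw [Nat.cast_succ, qThetaTerm_add_one hq₀ hz, norm_norm, norm_norm, norm_mul, zpow_natCast]
  gcongr

lemma summable_norm_qThetaTerm (hq₀ : q ≠ 0) (hq : ‖q‖ < 1) (hz : z ≠ 0) :
    Summable fun k : ℤ ↦ ‖qThetaTerm z q k‖ := by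
  refine .of_nat_of_neg (summable_norm_qThetaTerm_natCast hq₀ hq hz) ?_
  simpa only [qThetaTerm_div_left hq₀] using
    summable_norm_qThetaTerm_natCast hq₀ hq (div_ne_zero hq₀ hz)

variable [CompleteSpace 𝕜]

lemma tendsto_qPochhammer (hq : ‖q‖ < 1) (a : 𝕜) :
    Tendsto (qPochhammer a q) atTop (𝓝 (qPochhammerInf a q)) := by
  have hmul := multipliable_one_add_of_summable (summable_norm_neg_mul_pow hq a)
  simp only [← sub_eq_add_neg] at hmul
  exact hmul.hasProd.tendsto_prod_nat

lemma qPochhammerInf_ne_zero (hq : ‖q‖ < 1) {a : 𝕜} (ha : ∀ n : ℕ, 1 - a * q ^ n ≠ 0) :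
    qPochhammerInf a q ≠ 0 := by
  simp only [sub_eq_add_neg] at ha
  simpa only [qPochhammerInf, sub_eq_add_neg] using
    tprod_one_add_ne_zero_of_summable ha (summable_norm_neg_mul_pow hq a)

lemma qPochhammerInf_self_ne_zero (hq : ‖q‖ < 1) : qPochhammerInf q q ≠ 0 :=
  qPochhammerInf_ne_zero hq fun n ↦ by
    rw [← pow_succ']
    exact sub_ne_zero.mpr (pow_succ_ne_one_of_norm_lt_one hq n).symm

lemma tendsto_qExpCoeff (hq : ‖q‖ < 1) :
    Tendsto (qExpCoeff q) atTop (𝓝 (qPochhammerInf q q)⁻¹) := by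
  rw [← Nat.map_cast_int_atTop, tendsto_map'_iff]
  exact (tendsto_qPochhammer hq q).inv₀ (qPochhammerInf_self_ne_zero hq)

lemma exists_norm_qExpCoeff_le (hq : ‖q‖ < 1) : ∃ C, ∀ k, ‖qExpCoeff q k‖ ≤ C := by
  obtain ⟨C, hC⟩ := ((tendsto_qPochhammer hq q).inv₀
    (qPochhammerInf_self_ne_zero hq)).norm.bddAbove_range
  have hnat (n : ℕ) : ‖qExpCoeff q n‖ ≤ C := hC ⟨n, rfl⟩
  refine ⟨C, fun k ↦ ?_⟩
  rcases lt_or_ge k 0 with hk | hk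
  · rw [qExpCoeff_of_neg q hk, norm_zero]
    exact (norm_nonneg _).trans (hnat 0)
  · lift k to ℕ using hk
    exact hnat k

lemma tendsto_tsum_finiteThetaTerm (hq₀ : q ≠ 0) (hq : ‖q‖ < 1) (hz : z ≠ 0) :
    Tendsto (fun n : ℕ ↦ ∑' k, finiteThetaTerm z q n n k) atTop
      (𝓝 ((∑' k, qThetaTerm z q k) * ((qPochhammerInf q q)⁻¹ * (qPochhammerInf q q)⁻¹))) := by
  obtain ⟨C, hC⟩ := exists_norm_qExpCoeff_le hq
  have hC₀ : 0 ≤ C := (norm_nonneg _).trans (hC 0)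
  rw [← tsum_mul_right]
  refine tendsto_tsum_of_dominated_convergence
    ((summable_norm_qThetaTerm hq₀ hq hz).mul_right (C * C)) (fun k ↦ ?_)
    (.of_forall fun n k ↦ ?_)
  · have hcast : Tendsto (fun n : ℕ ↦ (n : ℤ)) atTop atTop := tendsto_natCast_atTop_atTop
    exact (((tendsto_qExpCoeff hq).comp (tendsto_atTop_add_const_right _ k hcast)).mul
      ((tendsto_qExpCoeff hq).comp (tendsto_atTop_add_const_right _ (-k) hcast))).const_mul _
  · rw [finiteThetaTerm, norm_mul, norm_mul]
    gcongr <;> apply hC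

theorem hasSum_qThetaTerm (hq₀ : q ≠ 0) (hq : ‖q‖ < 1) (hz : z ≠ 0) :
    HasSum (qThetaTerm z q) (qPochhammerInf q q * qTheta z q) := by
  have hne := qPochhammerInf_self_ne_zero hq
  have hdouble : Tendsto (fun n : ℕ ↦ n + n) atTop atTop :=
    tendsto_atTop_mono (fun n ↦ Nat.le_add_left n n) tendsto_id
  have hprod : Tendsto (fun n : ℕ ↦ ∑' k, finiteThetaTerm z q n n k) atTop
      (𝓝 (qTheta z q / qPochhammerInf q q)) := by
    simp only [(hasSum_finiteThetaTerm hq₀ (pow_succ_ne_one_of_norm_lt_one hq) hz _ _).tsum_eq]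
    exact ((tendsto_qPochhammer hq z).mul (tendsto_qPochhammer hq (q / z))).div
      ((tendsto_qPochhammer hq q).comp hdouble) hne
  have hlim := tendsto_nhds_unique (tendsto_tsum_finiteThetaTerm hq₀ hq hz) hprod
  rw [(summable_norm_qThetaTerm hq₀ hq hz).of_norm.hasSum_iff]
  field_simp at hlim
  linear_combination hlim

end TripleProduct

local notation "𝕢" => Function.Periodic.qParam 1

section Modularity

lemma qParam_one_eq_cexp (z : ℂ) : 𝕢 z = cexp (2 * π * I * z) := by
  rw [Function.Periodic.qParam, ofReal_one, div_one]

lemma qParam_one_sub (u v : ℂ) : 𝕢 (u - v) = 𝕢 u / 𝕢 v := by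
  simp only [qParam_one_eq_cexp, mul_sub, Complex.exp_sub]

lemma qParam_one_sub_one (u : ℂ) : 𝕢 (u - 1) = 𝕢 u := by
  rw [qParam_one_sub, qParam_one_eq_cexp 1, mul_one, exp_two_pi_mul_I, div_one]

lemma norm_qParam_one_lt_one {τ : ℂ} (hτ : 0 < τ.im) : ‖𝕢 τ‖ < 1 :=
  Function.Periodic.norm_qParam_lt_one one_pos hτ

lemma neg_one_div_im_pos {τ : ℂ} (hτ : 0 < τ.im) : 0 < (-1 / τ).im := by
  rw [neg_div, one_div, ← inv_neg]
  exact UpperHalfPlane.im_inv_neg_coe_pos ⟨τ, hτ⟩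

lemma mul_cpow {x y : ℂ} (hx : x ≠ 0) (hy : y ≠ 0) (h : arg x + arg y ∈ Set.Ioc (-π) π) (s : ℂ) :
    (x * y) ^ s = x ^ s * y ^ s := by
  rw [cpow_def_of_ne_zero (mul_ne_zero hx hy), cpow_def_of_ne_zero hx, cpow_def_of_ne_zero hy,
    Complex.log_mul hx hy h, add_mul, Complex.exp_add]

lemma eta_neg_one_div {τ : ℂ} (hτ : 0 < τ.im) :
    ModularForm.eta (-1 / τ) = (-I * τ) ^ (1 / 2 : ℂ) * ModularForm.eta τ := by
  have hre : 0 < (-I * τ).re := by simpa using hτ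
  have harg := abs_lt.mp (abs_arg_lt_pi_div_two_iff.mpr (.inl hre))
  have hsqrt : sqrt τ = sqrt I * (-I * τ) ^ (1 / 2 : ℂ) := by
    have harg_add : arg I + arg (-I * τ) ∈ Set.Ioc (-π) π := by
      rw [arg_I]
      constructor <;> linarith
    have hI : I * (-I * τ) = τ := by linear_combination -τ * I_mul_I
    rw [Complex.sqrt, Complex.sqrt, one_div,
      ← mul_cpow I_ne_zero (ne_zero_of_re_pos hre) harg_add, hI]
  have heta := ModularForm.eta_comp_eq_csqrt_I_inv hτ
  simp only [Function.comp_apply, Pi.smul_apply, Pi.mul_apply, smul_eq_mul] at heta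
  rw [heta, hsqrt, mul_assoc, inv_mul_cancel_left₀]
  simp [Complex.sqrt]

lemma eta_eq_mul_qPochhammerInf (τ : ℂ) :
    ModularForm.eta τ = cexp (π * I * τ / 12) * qPochhammerInf (𝕢 τ) (𝕢 τ) := by
  rw [ModularForm.eta, qPochhammerInf]
  simp only [ModularForm.eta_q, ← pow_succ']
  rw [Function.Periodic.qParam]
  push_cast
  ring_nf

lemma qThetaTerm_qParam_eq_jacobiTheta₂_term (u τ : ℂ) (k : ℤ) :
    qThetaTerm (𝕢 u) (𝕢 τ) k = jacobiTheta₂_term k (u + 1 / 2 - τ / 2) τ := by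
  have hneg : -𝕢 u = cexp (2 * π * I * (u + 1 / 2)) := by
    rw [qParam_one_eq_cexp, neg_eq_neg_one_mul, ← exp_pi_mul_I, ← Complex.exp_add]
    ring_nf
  have hexp : ((k * (k - 1) / 2 : ℤ) : ℂ) = k * (k - 1) / 2 := by
    rw [Int.cast_div (Int.even_mul_pred_self k).two_dvd two_ne_zero]
    push_cast
    rfl
  rw [qThetaTerm, jacobiTheta₂_term, hneg, qParam_one_eq_cexp, ← exp_int_mul, ← exp_int_mul, hexp,
    ← Complex.exp_add]
  ring_nf

lemma jacobiTheta₂_eq_mul_qTheta {τ : ℂ} (hτ : 0 < τ.im) (u : ℂ) :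
    jacobiTheta₂ (u + 1 / 2 - τ / 2) τ =
      qPochhammerInf (𝕢 τ) (𝕢 τ) * qTheta (𝕢 u) (𝕢 τ) := by
  rw [← (hasSum_qThetaTerm (Function.Periodic.qParam_ne_zero τ) (norm_qParam_one_lt_one hτ)
    (Function.Periodic.qParam_ne_zero u)).tsum_eq, jacobiTheta₂]
  simp only [qThetaTerm_qParam_eq_jacobiTheta₂_term]

lemma qTheta_qParam_eq {τ : ℂ} (hτ : 0 < τ.im) (u : ℂ) :
    qTheta (𝕢 u) (𝕢 τ) =
      cexp (π * I * τ / 12) * jacobiTheta₂ (u + 1 / 2 - τ / 2) τ / ModularForm.eta τ := by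
  rw [eq_div_iff (ModularForm.eta_ne_zero hτ), eta_eq_mul_qPochhammerInf,
    jacobiTheta₂_eq_mul_qTheta hτ]
  ring

theorem qTheta_qParam_neg_one_div {τ : ℂ} (hτ : 0 < τ.im) (u : ℂ) :
    qTheta (𝕢 (u / τ)) (𝕢 (-1 / τ)) =
      cexp (π * I * (u ^ 2 / τ + u / τ - u - 1 / 2 + (τ + 1 / τ) / 6)) *
        qTheta (𝕢 u) (𝕢 τ) := by
  have hτ₀ : τ ≠ 0 := UpperHalfPlane.ne_zero ⟨τ, hτ⟩
  have hsqrt : (-I * τ) ^ (1 / 2 : ℂ) ≠ 0 := by simp [cpow_eq_zero_iff, hτ₀]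
  have hpoint : u / τ + 1 / 2 - -1 / τ / 2 = (u + 1 / 2 - τ / 2) / τ + 1 := by
    field_simp
    ring
  have hexp : cexp (π * I * (-1 / τ) / 12) =
      cexp (π * I * (u ^ 2 / τ + u / τ - u - 1 / 2 + (τ + 1 / τ) / 6)) *
        cexp (π * I * τ / 12) * cexp (-π * I * (u + 1 / 2 - τ / 2) ^ 2 / τ) := by
    simp only [← Complex.exp_add]
    congr 1
    field_simp
    ring
  rw [qTheta_qParam_eq hτ, qTheta_qParam_eq (neg_one_div_im_pos hτ), hpoint,
    jacobiTheta₂_add_left, jacobiTheta₂_functional_equation (u + 1 / 2 - τ / 2),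
    eta_neg_one_div hτ, hexp]
  field_simp [hsqrt]

end Modularity

section Reflection

variable {b : ℂ}

lemma Gb_eq_qPochhammerInf (b x : ℂ) :
    Gb b x = zetaBar b * qPochhammerInf (𝕢 (b⁻¹ * (x - b⁻¹))) (𝕢 (-1 / b ^ 2)) /
      qPochhammerInf (𝕢 (b * x)) (𝕢 (b ^ 2)) := by
  rw [Gb, qPochhammerInf, qPochhammerInf]
  simp only [qParam_one_eq_cexp, ← exp_nat_mul, ← Complex.exp_add]
  ring_nf

lemma qTheta_qParam_neg_one_div_sq (hb : b ≠ 0) (x : ℂ) :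
    qTheta (𝕢 (b * (b - x) / b ^ 2)) (𝕢 (-1 / b ^ 2)) =
      qPochhammerInf (𝕢 (b⁻¹ * (b + b⁻¹ - x - b⁻¹))) (𝕢 (-1 / b ^ 2)) *
        qPochhammerInf (𝕢 (b⁻¹ * (x - b⁻¹))) (𝕢 (-1 / b ^ 2)) := by
  have hreflect : b⁻¹ * (b + b⁻¹ - x - b⁻¹) = b * (b - x) / b ^ 2 := by
    field_simp
    ring
  have hshift : -1 / b ^ 2 - b * (b - x) / b ^ 2 = b⁻¹ * (x - b⁻¹) - 1 := by
    field_simp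
    ring
  rw [qTheta, ← qParam_one_sub, hreflect, hshift, qParam_one_sub_one]

lemma qTheta_qParam_sq (hb : b ≠ 0) (x : ℂ) :
    qTheta (𝕢 (b * (b - x))) (𝕢 (b ^ 2)) =
      qPochhammerInf (𝕢 (b * (b + b⁻¹ - x))) (𝕢 (b ^ 2)) *
        qPochhammerInf (𝕢 (b * x)) (𝕢 (b ^ 2)) := by
  have hreflect : b ^ 2 - b * (b - x) = b * x := by ring
  have hshift : b * (b - x) = b * (b + b⁻¹ - x) - 1 := by
    field_simp
    ring
  rw [qTheta, ← qParam_one_sub, hreflect, hshift, qParam_one_sub_one]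

lemma Gb_mul_Gb_reflect (hb : b ≠ 0) (x : ℂ) :
    Gb b x * Gb b (b + b⁻¹ - x) = zetaBar b ^ 2 *
      qTheta (𝕢 (b * (b - x) / b ^ 2)) (𝕢 (-1 / b ^ 2)) /
        qTheta (𝕢 (b * (b - x))) (𝕢 (b ^ 2)) := by
  rw [Gb_eq_qPochhammerInf, Gb_eq_qPochhammerInf, qTheta_qParam_neg_one_div_sq hb,
    qTheta_qParam_sq hb]
  ring

lemma qPochhammerInf_qParam_ne_zero (hb : 0 < (b ^ 2).im) {x : ℂ}
    (hx : ∀ n : ℕ, 1 - cexp (2 * π * I * b * (x + n * b)) ≠ 0) :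
    qPochhammerInf (𝕢 (b * x)) (𝕢 (b ^ 2)) ≠ 0 := by
  refine qPochhammerInf_ne_zero (norm_qParam_one_lt_one hb) fun n ↦ ?_
  convert hx n using 2
  rw [qParam_one_eq_cexp, qParam_one_eq_cexp, ← exp_nat_mul, ← Complex.exp_add]
  ring_nf

lemma zetaBar_sq_mul_cexp (hb : b ≠ 0) (x : ℂ) :
    zetaBar b ^ 2 * cexp (π * I * ((b * (b - x)) ^ 2 / b ^ 2 + b * (b - x) / b ^ 2 - b * (b - x)
      - 1 / 2 + (b ^ 2 + 1 / b ^ 2) / 6)) = cexp (π * I * x * (x - (b + b⁻¹))) := by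
  rw [zetaBar, ← exp_nat_mul, ← Complex.exp_add]
  congr 1
  field_simp
  ring

end Reflection

end QuantumDilogarithm

open QuantumDilogarithm

/-- Reflection property `G_b(x) G_b(Q − x) = e^{πi x(x−Q)}` with `Q = b + b⁻¹`, for `Im(b²) > 0`,
at every `x` where both factors are defined. -/
theorem stmt6 (b : ℂ) (hb : 0 < (b ^ 2).im) (x : ℂ)
    (hx : ∀ n : ℕ, 1 - Complex.exp (2 * Real.pi * Complex.I * b * (x + n * b)) ≠ 0)
    (hQx : ∀ n : ℕ,
      1 - Complex.exp (2 * Real.pi * Complex.I * b * ((b + b⁻¹ - x) + n * b)) ≠ 0) :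
    Gb b x * Gb b (b + b⁻¹ - x) =
      Complex.exp (Real.pi * Complex.I * x * (x - (b + b⁻¹))) := by
  have hb₀ : b ≠ 0 := by
    rintro rfl
    simp at hb
  have htheta :=
    mul_ne_zero (qPochhammerInf_qParam_ne_zero hb hQx) (qPochhammerInf_qParam_ne_zero hb hx)
  rw [← qTheta_qParam_sq hb₀] at htheta
  rw [Gb_mul_Gb_reflect hb₀, qTheta_qParam_neg_one_div hb, ← mul_assoc,
    mul_div_cancel_right₀ _ htheta, zetaBar_sq_mul_cexp hb₀]
end
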